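/- Let (K_{i(e)}, w_e, p_e)_{e∈E} be a contractive Markov system with average contracting rate 0 < a < 1 satisfying the standing assumptions, and suppose its invariant Borel probability measure μ is unique. Let M be the generalized Markov measure on Σ = E^ℤ and S the left shift. Then the Kolmogorov–Sinai entropy of S with respect to M equals h_M(S) = −∑_{e∈E} ∫_{K_{i(e)}} p_e log p_e dμ (with the convention 0 log 0 = 0). -/

import Mathlib

open MeasureTheory Filter ENNReal

/-- The modulus of uniform continuity of a real-valued function on a
(pseudo)metric space, valued in `ℝ≥0∞`. -/
noncomputable def modulus {X : Type*} [PseudoMetricSpace X] (h : X → ℝ) (t : ℝ) : ℝ≥0∞ :=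
  ⨆ (x : X) (y : X) (_ : dist x y ≤ t), ENNReal.ofReal |h x - h y|

/-- A function is Dini-continuous if `∫_0^c φ(t)/t dt < ∞` for some `c > 0`,
where `φ` is its modulus of uniform continuity. -/
def DiniContinuous {X : Type*} [PseudoMetricSpace X] (h : X → ℝ) : Prop :=
  ∃ c > (0 : ℝ), ∫⁻ t in Set.Ioc (0 : ℝ) c, modulus h t / ENNReal.ofReal t < ⊤

/-- A Markov system on a metric space `K`, with vertex set `Fin N` and edge set `E`. -/
structure MarkovSystem (K : Type*) [MetricSpace K] [MeasurableSpace K]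
    (N : ℕ) (E : Type*) [Fintype E] where
  /-- initial vertex of an edge -/
  edgeI : E → Fin N
  /-- terminal vertex of an edge -/
  edgeT : E → Fin N
  /-- the partition `K_1, …, K_N` of `K` -/
  Ki : Fin N → Set K
  Ki_nonempty : ∀ v, (Ki v).Nonempty
  Ki_measurable : ∀ v, MeasurableSet (Ki v)
  Ki_disjoint : ∀ v v', v ≠ v' → Disjoint (Ki v) (Ki v')
  Ki_cover : ∀ x : K, ∃ v, x ∈ Ki v
  /-- the maps `w_e` -/
  w : E → K → K
  w_measurable : ∀ e, Measurable (w e)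
  w_mapsTo : ∀ e, Set.MapsTo (w e) (Ki (edgeI e)) (Ki (edgeT e))
  /-- the probability functions `p_e` -/
  p : E → K → ℝ
  p_measurable : ∀ e, Measurable (p e)
  p_nonneg : ∀ e x, 0 ≤ p e x
  p_sum_one : ∀ x : K, ∑ e, p e x = 1
  p_eq_zero : ∀ e, ∀ x : K, x ∉ Ki (edgeI e) → p e x = 0

namespace MarkovSystem

variable {K : Type*} [MetricSpace K] [MeasurableSpace K] {N : ℕ} {E : Type*} [Fintype E]

/-- Condition of contractiveness on average with rate `a`. -/
def ContractiveOnAvg (sys : MarkovSystem K N E) (a : ℝ) : Prop :=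
  ∀ v : Fin N, ∀ x ∈ sys.Ki v, ∀ y ∈ sys.Ki v,
    ∑ e, sys.p e x * dist (sys.w e x) (sys.w e y) ≤ a * dist x y

/-- `μ` is an invariant Borel probability measure of the Markov system:
`∫ Uf dμ = ∫ f dμ` for every bounded Borel measurable `f`. -/
def IsInvariant (sys : MarkovSystem K N E) (μ : Measure K) : Prop :=
  IsProbabilityMeasure μ ∧
  ∀ f : K → ℝ, Measurable f → (∃ B, ∀ x, |f x| ≤ B) →
    ∫ x, (∑ e, sys.p e x * f (sys.w e x)) ∂μ = ∫ x, f x ∂μ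

end MarkovSystem

/-- `wordProb w p (e₁ :: … :: eₖ) x = p_{e₁}(x) p_{e₂}(w_{e₁}x) ⋯ p_{eₖ}(w_{e_{k-1}} ∘ ⋯ ∘ w_{e₁}x)`. -/
def wordProb {K E : Type*} (w : E → K → K) (p : E → K → ℝ) : List E → K → ℝ
  | [], _ => 1
  | e :: l, x => p e x * wordProb w p l (w e x)

/-- `wordMap w (e₁ :: … :: eₖ) = w_{eₖ} ∘ ⋯ ∘ w_{e₁}`. -/
def wordMap {K E : Type*} (w : E → K → K) : List E → K → K
  | [], x => x
  | e :: l, x => wordMap w l (w e x)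

/-- `M` is the generalized Markov measure on `Σ = E^ℤ` associated with the Markov
system and the invariant measure `μ`. -/
def IsMarkovMeasure {K : Type*} [MetricSpace K] [MeasurableSpace K] {N : ℕ}
    {E : Type*} [Fintype E] [MeasurableSpace E]
    (sys : MarkovSystem K N E) (μ : Measure K) (M : Measure (ℤ → E)) : Prop :=
  IsProbabilityMeasure M ∧
  ∀ (m : ℤ) (es : List E),
    M {σ : ℤ → E | ∀ j : Fin es.length, σ (m + (j : ℕ)) = es.get j}
      = ENNReal.ofReal (∫ x, wordProb sys.w sys.p es x ∂μ)

/-- The left shift on `E^ℤ`. -/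
def shift {E : Type*} (σ : ℤ → E) : ℤ → E := fun k => σ (k + 1)

/-- `comps w σ m = w_{σ₀} ∘ w_{σ₋₁} ∘ ⋯ ∘ w_{σ₋ₘ}`. -/
def comps {K E : Type*} (w : E → K → K) (σ : ℤ → E) : ℕ → K → K
  | 0 => w (σ 0)
  | n + 1 => fun x => comps w σ n (w (σ (-((n : ℤ) + 1))) x)

/-- `F` is the coding map of the contractive Markov system:
`F(σ) = lim_{m → -∞} w_{σ₀} ∘ ⋯ ∘ w_{σₘ} x_{i(σₘ)}` for `M`-a.e. `σ`. -/
def IsCodingMap {K : Type*} [MetricSpace K] [MeasurableSpace K] {N : ℕ}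
    {E : Type*} [Fintype E] [MeasurableSpace E]
    (sys : MarkovSystem K N E) (M : Measure (ℤ → E)) (F : (ℤ → E) → K) : Prop :=
  Measurable F ∧ ∃ xs : Fin N → K, (∀ v, xs v ∈ sys.Ki v) ∧
    ∀ᵐ σ ∂M, Filter.Tendsto
      (fun m : ℕ => comps sys.w σ m (xs (sys.edgeI (σ (-(m : ℤ))))))
      Filter.atTop (nhds (F σ))

/-- Entropy of the finite measurable partition given by the fibers of `π`. -/
noncomputable def partEntropy {Ω : Type*} [MeasurableSpace Ω] (M : Measure Ω)
    {F : Type*} [Fintype F] (π : Ω → F) : ℝ :=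
  -∑ f : F, ((M (π ⁻¹' {f})).toReal * Real.log (M (π ⁻¹' {f})).toReal)

/-- The Kolmogorov–Sinai entropy of a measure-preserving transformation `S`
with respect to `M`: the supremum over all finite measurable partitions `π` of
`inf_n (1/n) H(⋁_{i=0}^{n-1} S^{-i} π)`. -/
noncomputable def ksEntropy {Ω : Type*} [MeasurableSpace Ω] (M : Measure Ω) (S : Ω → Ω) : ℝ≥0∞ :=
  ⨆ (k : ℕ) (π : Ω → Fin k) (_ : ∀ j, MeasurableSet (π ⁻¹' {j})),
    ⨅ n : ℕ, ENNReal.ofReal (((n : ℝ) + 1)⁻¹ *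
      partEntropy M (fun ω => fun j : Fin (n + 1) => π (S^[(j : ℕ)] ω)))

/-- Gibbs' inequality: the entropy of `P` is at most its cross entropy with any `Q` whose total
mass does not exceed that of `P`. -/
theorem sum_negMulLog_le_sum_mul_neg_log {ι : Type*} [Fintype ι] {P Q : ι → ℝ}
    (hP : ∀ i, 0 ≤ P i) (hQ : ∀ i, 0 ≤ Q i) (hPQ : ∀ i, P i ≠ 0 → Q i ≠ 0)
    (hsum : ∑ i, Q i ≤ ∑ i, P i) :
    ∑ i, (P i).negMulLog ≤ ∑ i, P i * -Real.log (Q i) := by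
  have key : ∀ i, (P i).negMulLog - P i * -Real.log (Q i) ≤ Q i - P i := by
    intro i
    rcases eq_or_ne (P i) 0 with h | h
    · simpa [h] using hQ i
    · have hp : 0 < P i := (hP i).lt_of_ne' h
      have hq : 0 < Q i := (hQ i).lt_of_ne' (hPQ i h)
      have h1 := mul_le_mul_of_nonneg_left (Real.log_le_sub_one_of_pos (div_pos hq hp)) hp.le
      rw [Real.log_div hq.ne' hp.ne', mul_sub, mul_sub, mul_div_cancel₀ _ h] at h1
      simp only [Real.negMulLog]
      linarith
  have := Finset.sum_le_sum fun i (_ : i ∈ Finset.univ) => key i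
  rw [Finset.sum_sub_distrib, Finset.sum_sub_distrib] at this
  linarith

theorem partEntropy_eq_sum_negMulLog {Ω F : Type*} [MeasurableSpace Ω] (M : Measure Ω) [Fintype F]
    (π : Ω → F) : partEntropy M π = ∑ f, (M.real (π ⁻¹' {f})).negMulLog := by
  simp [partEntropy, Real.negMulLog, Measure.real]

/-- Chain-rule estimate: if `X j` agrees with a function `f j` of `W` outside a small set for each
`j`, then the entropy of `X` hardly exceeds that of `W`. -/
theorem partEntropy_pi_le {Ω B : Type*} [MeasurableSpace Ω] (M : Measure Ω) [IsProbabilityMeasure M]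
    [Fintype B] {k n : ℕ} (X : Ω → Fin n → Fin k) (W : Ω → B)
    (hX : ∀ x, MeasurableSet (X ⁻¹' {x})) (hW : ∀ b, MeasurableSet (W ⁻¹' {b}))
    (f : B → Fin n → Fin k) {ε : ℝ} (hε : 0 < ε) :
    partEntropy M X ≤ partEntropy M W +
      ∑ j, (Real.log (1 + k * ε) + M.real {ω | X ω j ≠ f (W ω) j} * -Real.log ε) := by
  classical
  set PW : B → ℝ := fun b => M.real (W ⁻¹' {b}) with hPW
  set P : (Fin n → Fin k) × B → ℝ := fun z => M.real ((fun ω => (X ω, W ω)) ⁻¹' {z}) with hPdef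
  have hZ : ∀ z, MeasurableSet ((fun ω => (X ω, W ω)) ⁻¹' {z}) := by
    rintro ⟨x, b⟩
    convert (hX x).inter (hW b) using 1
    ext ω; simp
  have hsumset : ∀ T : Finset ((Fin n → Fin k) × B),
      ∑ z ∈ T, P z = M.real {ω | (X ω, W ω) ∈ T} := fun T =>
    sum_measureReal_preimage_singleton T (fun z _ => hZ z)
  have hP0 : ∀ z, 0 ≤ P z := fun z => measureReal_nonneg
  have hmargX : ∀ x, ∑ b, P (x, b) = M.real (X ⁻¹' {x}) := by
    intro x
    have := hsumset (Finset.univ.filter fun z => z.1 = x)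
    rw [Finset.sum_filter, Fintype.sum_prod_type] at this
    simp only [Finset.mem_filter, Finset.mem_univ, true_and] at this
    rw [Finset.sum_eq_single x (by intro y _ hy; simp [hy]) (by simp)] at this
    simpa [Set.preimage] using this
  have hmargW : ∀ b, ∑ x, P (x, b) = PW b := by
    intro b
    have := hsumset (Finset.univ.filter fun z => z.2 = b)
    rw [Finset.sum_filter, Fintype.sum_prod_type_right] at this
    simp only [Finset.mem_filter, Finset.mem_univ, true_and] at this
    rw [Finset.sum_eq_single b (by intro y _ hy; simp [hy]) (by simp)] at this
    simpa [Set.preimage, hPW] using this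
  have htot : ∑ z, P z = 1 := by
    rw [hsumset]; simp
  have hPWtot : ∑ b, PW b = 1 := by
    rw [← htot, Fintype.sum_prod_type_right]
    exact Finset.sum_congr rfl fun b _ => (hmargW b).symm
  have hk : 0 < 1 + k * ε := by positivity
  set c : Fin k → Fin k → ℝ := fun i l => (if i = l then 1 else ε) / (1 + k * ε) with hc
  have hcpos : ∀ i l, 0 < c i l := by
    intro i l; simp only [hc]; split_ifs <;> positivity
  have hcsum : ∀ l, ∑ i, c i l ≤ 1 := by
    intro l
    simp only [hc]
    rw [← Finset.sum_div, div_le_one hk]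
    calc ∑ i, (if i = l then (1 : ℝ) else ε) ≤ ∑ i, ((if i = l then 1 else 0) + ε) := by
          gcongr with i; split_ifs <;> linarith
      _ = 1 + k * ε := by simp [Finset.sum_add_distrib]
  have hclog : ∀ i l, -Real.log (c i l) ≤
      Real.log (1 + k * ε) + (if i ≠ l then 1 else 0) * -Real.log ε := by
    intro i l
    simp only [hc]
    by_cases h : i = l
    · simp [h]
    · simp only [h, if_false, ne_eq, not_false_eq_true, if_true]
      rw [Real.log_div hε.ne' hk.ne']; linarith
  set Q : (Fin n → Fin k) × B → ℝ := fun z => PW z.2 * ∏ j, c (z.1 j) (f z.2 j) with hQ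
  have hPPW : ∀ z, P z ≠ 0 → PW z.2 ≠ 0 := by
    rintro ⟨x, b⟩ h h0
    refine h (le_antisymm ?_ (hP0 _))
    rw [← h0, ← hmargW b]
    exact Finset.single_le_sum (f := fun x => P (x, b)) (fun x _ => hP0 _) (Finset.mem_univ x)
  have hprodpos : ∀ z : (Fin n → Fin k) × B, 0 < ∏ j, c (z.1 j) (f z.2 j) := fun z =>
    Finset.prod_pos fun j _ => hcpos _ _
  have hQsum : ∑ z, Q z ≤ ∑ z, P z := by
    rw [htot, Fintype.sum_prod_type_right, ← hPWtot]
    refine Finset.sum_le_sum fun b _ => ?_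
    simp only [hQ]
    rw [← Finset.mul_sum]
    refine mul_le_of_le_one_right measureReal_nonneg ?_
    rw [← Fintype.prod_sum fun j i => c i (f b j)]
    exact Finset.prod_le_one (fun j _ => Finset.sum_nonneg fun i _ => (hcpos _ _).le)
      fun j _ => hcsum _
  have hgibbs := sum_negMulLog_le_sum_mul_neg_log hP0
    (fun z => mul_nonneg measureReal_nonneg (hprodpos z).le)
    (fun z hz => mul_ne_zero (hPPW z hz) (hprodpos z).ne') hQsum
  rw [partEntropy_eq_sum_negMulLog, partEntropy_eq_sum_negMulLog]
  calc ∑ x, (M.real (X ⁻¹' {x})).negMulLog ≤ ∑ x, ∑ b, (P (x, b)).negMulLog := by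
        refine Finset.sum_le_sum fun x _ => ?_
        rw [← hmargX x]
        simp only [Real.negMulLog, neg_mul]
        rw [Finset.sum_mul, ← Finset.sum_neg_distrib]
        refine Finset.sum_le_sum fun b _ => ?_
        rcases eq_or_ne (P (x, b)) 0 with h | h
        · simp [h]
        · have hp : 0 < P (x, b) := (hP0 _).lt_of_ne' h
          have := Finset.single_le_sum (f := fun b => P (x, b)) (fun b _ => hP0 _)
            (Finset.mem_univ b)
          have := mul_le_mul_of_nonneg_left (Real.log_le_log hp this) hp.le
          linarith
    _ = ∑ z, (P z).negMulLog := by rw [Fintype.sum_prod_type]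
    _ ≤ ∑ z, P z * -Real.log (Q z) := hgibbs
    _ ≤ ∑ z, (P z * -Real.log (PW z.2) + ∑ j, (P z * Real.log (1 + k * ε) +
          (if z.1 j ≠ f z.2 j then P z else 0) * -Real.log ε)) := by
        refine Finset.sum_le_sum fun z _ => ?_
        rcases eq_or_ne (P z) 0 with h | h
        · simp [h]
        · simp only [hQ]
          rw [Real.log_mul (hPPW z h) (hprodpos z).ne', Real.log_prod fun j _ => (hcpos _ _).ne',
            neg_add, mul_add, ← Finset.sum_neg_distrib, Finset.mul_sum]
          gcongr with j
          refine (mul_le_mul_of_nonneg_left (hclog _ _) (hP0 z)).trans_eq ?_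
          split_ifs <;> ring
    _ = _ := by
        rw [Finset.sum_add_distrib, Finset.sum_comm (s := Finset.univ (α := _ × B))]
        congr 1
        · rw [Fintype.sum_prod_type_right]
          refine Finset.sum_congr rfl fun b _ => ?_
          change ∑ x, P (x, b) * -Real.log (PW b) = (PW b).negMulLog
          rw [← Finset.sum_mul, hmargW, Real.negMulLog]
          ring
        · refine Finset.sum_congr rfl fun j _ => ?_
          rw [Finset.sum_add_distrib, ← Finset.sum_mul, ← Finset.sum_mul, htot, one_mul,
            ← Finset.sum_filter, hsumset]
          simp

/-- The word of length `n` read off `σ` from position `s` on. -/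
def subword {E : Type*} (s : ℤ) (n : ℕ) (σ : ℤ → E) : Fin n → E := fun i => σ (s + (i : ℕ))

theorem measurable_subword {E : Type*} [MeasurableSpace E] (s : ℤ) (n : ℕ) :
    Measurable (subword (E := E) s n) :=
  measurable_pi_lambda _ fun _ => measurable_pi_apply _

theorem measurable_shift {E : Type*} [MeasurableSpace E] : Measurable (shift (E := E)) :=
  measurable_pi_lambda _ fun _ => measurable_pi_apply _

theorem shift_iterate_apply {E : Type*} (j : ℕ) (σ : ℤ → E) (i : ℤ) :
    shift^[j] σ i = σ (i + j) := by
  induction j generalizing σ with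
  | zero => simp
  | succ j ih =>
    rw [Function.iterate_succ_apply, ih, shift]
    congr 1
    push_cast
    ring

/-- The sets of sequences which are determined by finitely many coordinates. -/
def windowSets (E : Type*) : Set (Set (ℤ → E)) :=
  {A | ∃ m : ℕ, ∀ σ τ : ℤ → E, (∀ i : ℤ, |i| ≤ m → σ i = τ i) → (σ ∈ A ↔ τ ∈ A)}

theorem eq_of_subword_eq {E : Type*} {m : ℕ} {σ τ : ℤ → E}
    (h : subword (-m) (2 * m + 1) σ = subword (-m) (2 * m + 1) τ) (i : ℤ) (hi : |i| ≤ m) :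
    σ i = τ i := by
  rw [abs_le] at hi
  have := congrFun h ⟨(i + m).toNat, by omega⟩
  simp only [subword] at this
  rwa [show (-(m : ℤ) + ((i + m).toNat : ℕ)) = i by omega] at this

theorem exists_preimage_subword_of_mem_windowSets {E : Type*} {A : Set (ℤ → E)}
    (hA : A ∈ windowSets E) :
    ∃ (m : ℕ) (T : Set (Fin (2 * m + 1) → E)), A = subword (-m) (2 * m + 1) ⁻¹' T := by
  obtain ⟨m, hm⟩ := hA
  refine ⟨m, subword (-m) (2 * m + 1) '' A, Set.Subset.antisymm (Set.subset_preimage_image _ _) ?_⟩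
  rintro σ ⟨τ, hτ, h⟩
  exact (hm τ σ (eq_of_subword_eq h)).1 hτ

theorem isSetAlgebra_windowSets (E : Type*) : IsSetAlgebra (windowSets E) where
  empty_mem := ⟨0, by simp⟩
  compl_mem := by
    rintro A ⟨m, hm⟩
    exact ⟨m, fun σ τ h => not_congr (hm σ τ h)⟩
  union_mem := by
    rintro A B ⟨m, hm⟩ ⟨n, hn⟩
    refine ⟨max m n, fun σ τ h => or_congr (hm σ τ fun i hi => h i ?_) (hn σ τ fun i hi => h i ?_)⟩
    · exact hi.trans (by simp)
    · exact hi.trans (by simp)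

theorem generateFrom_windowSets {E : Type*} [Finite E] [MeasurableSpace E]
    [MeasurableSingletonClass E] :
    (MeasurableSpace.pi : MeasurableSpace (ℤ → E)) =
      MeasurableSpace.generateFrom (windowSets E) := by
  refine le_antisymm ?_ (MeasurableSpace.generateFrom_le fun A hA => ?_)
  · refine iSup_le fun i => ?_
    rintro _ ⟨T, -, rfl⟩
    refine MeasurableSpace.measurableSet_generateFrom ⟨i.natAbs, fun σ τ h => ?_⟩
    simp [h i (by simp)]
  · obtain ⟨m, T, rfl⟩ := exists_preimage_subword_of_mem_windowSets hA
    exact measurable_subword _ _ T.toFinite.measurableSet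

theorem isPiSystem_windowSets (E : Type*) : IsPiSystem (windowSets E) :=
  fun _ hs _ ht _ => (isSetAlgebra_windowSets E).inter_mem hs ht

/-- A probability measure on `E^ℤ` whose finite words have position-independent laws is invariant
under the shift. -/
theorem measurePreserving_shift {E : Type*} [Finite E] [MeasurableSpace E]
    [MeasurableSingletonClass E] (M : Measure (ℤ → E)) [IsProbabilityMeasure M]
    (h : ∀ (s t : ℤ) (n : ℕ) (b : Fin n → E), M (subword s n ⁻¹' {b}) = M (subword t n ⁻¹' {b})) :
    MeasurePreserving shift M M := by
  refine ⟨measurable_shift, ?_⟩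
  have := Measure.isProbabilityMeasure_map (μ := M) measurable_shift.aemeasurable
  refine ext_of_generate_finite _ generateFrom_windowSets (isPiSystem_windowSets E) ?_ (by simp)
  intro A hA
  rw [Measure.map_apply measurable_shift (generateFrom_windowSets (E := E) ▸
    MeasurableSpace.measurableSet_generateFrom hA)]
  obtain ⟨m, T, rfl⟩ := exists_preimage_subword_of_mem_windowSets hA
  have hmap : M.map (subword (1 - m) (2 * m + 1)) = M.map (subword (-m) (2 * m + 1)) := by
    refine Measure.ext_of_singleton fun b => ?_
    rw [Measure.map_apply (measurable_subword _ _) (measurableSet_singleton _),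
      Measure.map_apply (measurable_subword _ _) (measurableSet_singleton _), h]
  have hT : MeasurableSet T := T.toFinite.measurableSet
  have hcomp : subword (E := E) (-m) (2 * m + 1) ∘ shift = subword (1 - m) (2 * m + 1) := by
    funext σ i
    simp only [Function.comp, subword, shift]
    congr 1
    ring
  rw [← Set.preimage_comp, hcomp, ← Measure.map_apply (measurable_subword _ _) hT, hmap,
    Measure.map_apply (measurable_subword _ _) hT]

/-- Every finite measurable partition of `E^ℤ` is approximated by one which is determined by
finitely many coordinates. -/
theorem exists_window_approx {E : Type*} [Finite E] [MeasurableSpace E]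
    [MeasurableSingletonClass E] (M : Measure (ℤ → E)) [IsProbabilityMeasure M] {k : ℕ}
    (π : (ℤ → E) → Fin k) (hπ : ∀ j, MeasurableSet (π ⁻¹' {j})) {η : ℝ} (hη : 0 < η) :
    ∃ (m : ℕ) (π' : (ℤ → E) → Fin k) (D : Set (ℤ → E)), MeasurableSet D ∧ M.real D ≤ η ∧
      (∀ σ, σ ∉ D → π σ = π' σ) ∧
      ∀ σ τ, (∀ i : ℤ, |i| ≤ m → σ i = τ i) → π' σ = π' τ := by
  classical
  obtain ⟨σ₀⟩ : Nonempty (ℤ → E) := M.nonempty_of_neZero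
  have hk : 0 < (k : ℝ) := by exact_mod_cast (π σ₀).pos
  have hdense := Measure.MeasureDense.of_generateFrom_isSetAlgebra_finite M
    (isSetAlgebra_windowSets E) generateFrom_windowSets
  choose A hA hMA using fun j : Fin k =>
    hdense.approx (π ⁻¹' {j}) (hπ j) (measure_ne_top _ _) (η / k) (by positivity)
  choose m hm using hA
  refine ⟨Finset.univ.sup m, fun σ => if h : ∃ j, σ ∈ A j then h.choose else π σ₀,
    ⋃ j, symmDiff (π ⁻¹' {j}) (A j), ?_, ?_, ?_, ?_⟩
  · exact MeasurableSet.iUnion fun j => (hπ j).symmDiff (hdense.measurable _ ⟨_, hm j⟩)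
  · calc M.real (⋃ j, symmDiff (π ⁻¹' {j}) (A j))
        ≤ ∑ j, M.real (symmDiff (π ⁻¹' {j}) (A j)) := measureReal_iUnion_fintype_le _
      _ ≤ ∑ _j : Fin k, η / k := by
          gcongr with j
          exact ENNReal.toReal_le_of_le_ofReal (by positivity) (hMA j).le
      _ = η := by simp; field_simp
  · intro σ hσ
    have hmem : ∀ j, σ ∈ A j ↔ π σ = j := by
      intro j
      by_contra hj
      refine hσ (Set.mem_iUnion.2 ⟨j, ?_⟩)
      rw [Set.mem_symmDiff, Set.mem_preimage, Set.mem_singleton_iff]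
      tauto
    have h : ∃ j, σ ∈ A j := ⟨π σ, (hmem _).2 rfl⟩
    simp only [h, dif_pos]
    exact (hmem _).1 h.choose_spec
  · intro σ τ h
    have : ∀ j, σ ∈ A j ↔ τ ∈ A j := fun j => hm j σ τ fun i hi =>
      h i (hi.trans (by exact_mod_cast Finset.le_sup (f := m) (Finset.mem_univ j)))
    simp only [this]

/-- If the word entropies grow at most linearly with rate `h`, then so does the entropy of every
finite measurable partition of `E^ℤ`. -/
theorem ksEntropy_shift_le {E : Type*} [Fintype E] [MeasurableSpace E]
    [MeasurableSingletonClass E] (M : Measure (ℤ → E)) [IsProbabilityMeasure M]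
    (hM : MeasurePreserving shift M M) {h : ℝ} (hh : 0 ≤ h)
    (hword : ∀ ε > 0, ∀ᶠ n : ℕ in atTop, ∀ s : ℤ, partEntropy M (subword s n) ≤ n * (h + ε)) :
    ksEntropy M shift ≤ ENNReal.ofReal h := by
  obtain ⟨σ₀⟩ : Nonempty (ℤ → E) := M.nonempty_of_neZero
  refine iSup_le fun k => iSup_le fun π => iSup_le fun hπ => ?_
  refine ENNReal.le_of_forall_pos_le_add fun ε' hε' _ => ?_
  set ε : ℝ := (ε' : ℝ) / 4 with hεdef
  have hε : 0 < ε := by positivity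
  obtain ⟨θ, hθ0, hθ1, hθ⟩ : ∃ θ : ℝ, 0 < θ ∧ θ ≤ 1 ∧ Real.log (1 + k * θ) ≤ ε := by
    refine ⟨min 1 (ε / (k + 1)), by positivity, min_le_left _ _, ?_⟩
    have h1 : (k : ℝ) * min 1 (ε / (k + 1)) ≤ ε := by
      calc (k : ℝ) * min 1 (ε / (k + 1)) ≤ (k + 1) * (ε / (k + 1)) := by
            gcongr
            · linarith
            · exact min_le_right _ _
        _ = ε := by field_simp
    refine (Real.log_le_sub_one_of_pos (by positivity)).trans ?_
    linarith
  have hlog : 0 ≤ -Real.log θ := by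
    have := Real.log_nonpos hθ0.le hθ1
    linarith
  obtain ⟨m, π', D, hDm, hD, hπD, hπ'⟩ := exists_window_approx M π hπ
    (η := ε / (-Real.log θ + 1)) (by positivity)
  have hbound : ∀ n : ℕ, partEntropy M (fun ω => fun j : Fin (n + 1) => π (shift^[(j : ℕ)] ω)) ≤
      partEntropy M (subword (E := E) (-m) (n + 1 + 2 * m)) + (n + 1) * (2 * ε) := by
    intro n
    let fill : (Fin (n + 1 + 2 * m) → E) → ℤ → E := fun b i =>
      if hi : (i + m).toNat < n + 1 + 2 * m then b ⟨(i + m).toNat, hi⟩ else σ₀ 0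
    have hmeas : ∀ j : ℕ, Measurable (shift (E := E))^[j] := fun j => measurable_shift.iterate j
    have hX : ∀ x, MeasurableSet
        ((fun ω => fun j : Fin (n + 1) => π (shift^[(j : ℕ)] ω)) ⁻¹' {x}) := by
      intro x
      have : (fun ω => fun j : Fin (n + 1) => π (shift^[(j : ℕ)] ω)) ⁻¹' {x} =
          ⋂ j : Fin (n + 1), shift^[(j : ℕ)] ⁻¹' (π ⁻¹' {x j}) := by
        ext ω
        simp [funext_iff]
      rw [this]
      exact MeasurableSet.iInter fun j => hmeas _ (hπ _)
    refine (partEntropy_pi_le M _ (subword (-m) (n + 1 + 2 * m)) hX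
      (fun b => measurable_subword _ _ (measurableSet_singleton _))
      (fun b j => π' (shift^[(j : ℕ)] (fill b))) hθ0).trans ?_
    gcongr
    have hj : ∀ j : Fin (n + 1), Real.log (1 + k * θ) +
        M.real {ω | π (shift^[(j : ℕ)] ω) ≠
          π' (shift^[(j : ℕ)] (fill (subword (-m) (n + 1 + 2 * m) ω)))} * -Real.log θ ≤ 2 * ε := by
      intro j
      have hsub : {ω | π (shift^[(j : ℕ)] ω) ≠
          π' (shift^[(j : ℕ)] (fill (subword (-m) (n + 1 + 2 * m) ω)))} ⊆
            shift^[(j : ℕ)] ⁻¹' D := by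
        intro ω hω
        by_contra hmem
        refine hω ((hπD _ hmem).trans (hπ' _ _ fun i hi => ?_))
        rw [abs_le] at hi
        have hlt : (i + j + m).toNat < n + 1 + 2 * m := by omega
        simp only [shift_iterate_apply, fill, hlt, dif_pos, subword]
        congr 1
        omega
      have hmono : M.real {ω | π (shift^[(j : ℕ)] ω) ≠
          π' (shift^[(j : ℕ)] (fill (subword (-m) (n + 1 + 2 * m) ω)))} ≤
          ε / (-Real.log θ + 1) := by
        refine (measureReal_mono hsub).trans ?_
        rwa [(hM.iterate j).measureReal_preimage hDm.nullMeasurableSet]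
      have h2 : ε / (-Real.log θ + 1) * -Real.log θ ≤ ε := by
        rw [div_mul_eq_mul_div, div_le_iff₀ (by positivity)]
        linarith
      have h3 := mul_le_mul_of_nonneg_right hmono hlog
      linarith
    refine (Finset.sum_le_sum fun j _ => hj j).trans ?_
    simp
  have hlarge : ∀ᶠ n : ℕ in atTop, (2 * m : ℝ) * (h + ε) ≤ (n + 1) * ε := by
    have : Tendsto (fun n : ℕ => ((n : ℝ) + 1) * ε) atTop atTop :=
      (tendsto_atTop_add_const_right _ _ tendsto_natCast_atTop_atTop).atTop_mul_const hε
    exact this.eventually_ge_atTop _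
  have hword' := (tendsto_add_atTop_nat (1 + 2 * m)).eventually (hword ε hε)
  obtain ⟨n, hn1, hn2⟩ := (hlarge.and hword').exists
  refine (iInf_le _ n).trans ?_
  have hfin : ((n : ℝ) + 1)⁻¹ *
      partEntropy M (fun ω => fun j : Fin (n + 1) => π (shift^[(j : ℕ)] ω)) ≤ h + ε' := by
    rw [inv_mul_le_iff₀ (by positivity)]
    have h1 := hbound n
    have h2 := hn2 (-m)
    rw [← add_assoc] at h2
    push_cast at h2
    have h3 : (ε' : ℝ) = 4 * ε := by rw [hεdef]; ring
    rw [h3]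
    nlinarith
  calc _ ≤ ENNReal.ofReal (h + ε') := ENNReal.ofReal_le_ofReal hfin
    _ = _ := by rw [ENNReal.ofReal_add hh ε'.coe_nonneg, ENNReal.ofReal_coe_nnreal]

/-- The entropy of the shift is at least any linear rate of growth of the word entropies. -/
theorem le_ksEntropy_shift {E : Type*} [Fintype E] [MeasurableSpace E]
    [MeasurableSingletonClass E] (M : Measure (ℤ → E)) {h : ℝ}
    (hword : ∀ n : ℕ, n * h ≤ partEntropy M (subword 0 n)) :
    ENNReal.ofReal h ≤ ksEntropy M shift := by
  let φ := Fintype.equivFin E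
  refine le_iSup_of_le (Fintype.card E) (le_iSup_of_le (fun σ => φ (σ 0)) (le_iSup_of_le ?_ ?_))
  · intro j
    exact (measurable_pi_apply 0 : Measurable fun σ : ℤ → E => σ 0)
      (φ ⁻¹' {j}).toFinite.measurableSet
  · refine le_iInf fun n => ENNReal.ofReal_le_ofReal ?_
    rw [le_inv_mul_iff₀ (by positivity)]
    have h1 := hword (n + 1)
    push_cast at h1
    refine h1.trans_eq ?_
    rw [partEntropy_eq_sum_negMulLog, partEntropy_eq_sum_negMulLog]
    refine Fintype.sum_equiv (Equiv.arrowCongr (Equiv.refl _) φ) _ _ fun b => ?_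
    congr 2
    ext σ
    simp [subword, shift_iterate_apply, funext_iff]

theorem sum_fin_succ_arrow {E : Type*} [Fintype E] {n : ℕ} (F : (Fin (n + 1) → E) → ℝ) :
    ∑ f, F f = ∑ e, ∑ f : Fin n → E, F (Fin.cons e f) := by
  rw [← Fintype.sum_prod_type']
  exact (Fintype.sum_equiv (Fin.consEquiv fun _ => E) _ _ fun _ => rfl).symm

theorem wordProb_ofFn_cons {K E : Type*} (w : E → K → K) (p : E → K → ℝ) {n : ℕ} (e : E)
    (f : Fin n → E) (x : K) :
    wordProb w p (List.ofFn (Fin.cons e f : Fin (n + 1) → E)) x =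
      p e x * wordProb w p (List.ofFn f) (w e x) := by
  simp [List.ofFn_succ, wordProb]

theorem setOf_forall_get_ofFn {E : Type*} (s : ℤ) {n : ℕ} (b : Fin n → E) :
    {σ : ℤ → E | ∀ j : Fin (List.ofFn b).length, σ (s + (j : ℕ)) = (List.ofFn b).get j} =
      subword s n ⁻¹' {b} := by
  ext σ
  simp only [Set.mem_ofPred_eq, Set.mem_preimage, Set.mem_singleton_iff, funext_iff, subword]
  refine ⟨fun h j => ?_, fun h j => ?_⟩
  · simpa using h ⟨j, by simp⟩
  · simpa using h ⟨j, by simpa using j.2⟩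

/-- A Dini-continuous function is uniformly continuous. -/
theorem DiniContinuous.exists_forall_abs_sub_le {X : Type*} [PseudoMetricSpace X] {h : X → ℝ}
    (hh : DiniContinuous h) {η : ℝ} (hη : 0 < η) :
    ∃ t > 0, ∀ x y, dist x y ≤ t → |h x - h y| ≤ η := by
  by_contra! hcon
  obtain ⟨c, hc, hlt⟩ := hh
  have hmod : ∀ t > 0, ENNReal.ofReal η ≤ modulus h t := by
    intro t ht
    obtain ⟨x, y, hxy, hlt⟩ := hcon t ht
    exact (ENNReal.ofReal_le_ofReal hlt.le).trans
      (le_iSup_of_le x (le_iSup_of_le y (le_iSup_of_le hxy le_rfl)))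
  have hlintegral : ∫⁻ t in Set.Ioc (0 : ℝ) c, ENNReal.ofReal (η * t⁻¹) < ⊤ := by
    refine lt_of_le_of_lt (setLIntegral_mono' measurableSet_Ioc fun t ht => ?_) hlt
    rw [ENNReal.ofReal_mul hη.le, ENNReal.ofReal_inv_of_pos ht.1, div_eq_mul_inv]
    gcongr
    exact hmod t ht.1
  have hinteg : IntegrableOn (fun t : ℝ => η * t⁻¹) (Set.Ioc 0 c) := by
    refine ⟨by fun_prop, ?_⟩
    rw [hasFiniteIntegral_iff_ofReal]
    · exact hlintegral
    · filter_upwards [ae_restrict_mem measurableSet_Ioc] with t ht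
      have := ht.1
      positivity
  have hinv : IntegrableOn (fun t : ℝ => t⁻¹) (Set.Ioc 0 c) := by
    simpa [IntegrableOn, hη.ne'] using hinteg.const_mul η⁻¹
  rw [← intervalIntegrable_iff_integrableOn_Ioc_of_le hc.le, intervalIntegrable_inv_iff] at hinv
  rcases hinv with h0 | h0
  · exact hc.ne h0
  · exact h0 Set.left_mem_uIcc

theorem abs_negMulLog_le_one {t : ℝ} (h0 : 0 ≤ t) (h1 : t ≤ 1) : |t.negMulLog| ≤ 1 := by
  rw [abs_of_nonneg (Real.negMulLog_nonneg h0 h1)]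
  linarith [Real.negMulLog_le_one_sub_self h0]

theorem integrable_of_bounded {X : Type*} [MeasurableSpace X] {μ : Measure X} [IsFiniteMeasure μ]
    {g : X → ℝ} (hg : Measurable g) {B : ℝ} (hB : ∀ x, |g x| ≤ B) : Integrable g μ :=
  Integrable.of_bound hg.aestronglyMeasurable B (ae_of_all _ hB)

namespace MarkovSystem

variable {K : Type*} [MetricSpace K] [MeasurableSpace K] {N : ℕ} {E : Type*} [Fintype E]
  (sys : MarkovSystem K N E)

/-- The probability `P_x(f)` that the system started at `x` produces the word `f`. -/
noncomputable def pathProb {n : ℕ} (f : Fin n → E) (x : K) : ℝ :=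
  wordProb sys.w sys.p (List.ofFn f) x

/-- The entropy of the edge chosen at `x`. -/
noncomputable def edgeEntropy (x : K) : ℝ := ∑ e, (sys.p e x).negMulLog

/-- The entropy of the word of length `n` produced by the system started at `x`. -/
noncomputable def pathEntropy (n : ℕ) (x : K) : ℝ :=
  ∑ f : Fin n → E, (sys.pathProb f x).negMulLog

theorem pathProb_cons {n : ℕ} (e : E) (f : Fin n → E) (x : K) :
    sys.pathProb (Fin.cons e f : Fin (n + 1) → E) x = sys.p e x * sys.pathProb f (sys.w e x) :=
  wordProb_ofFn_cons _ _ _ _ _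

@[simp]
theorem pathProb_zero (f : Fin 0 → E) (x : K) : sys.pathProb f x = 1 := by
  simp [pathProb, wordProb]

theorem p_le_one (e : E) (x : K) : sys.p e x ≤ 1 :=
  sys.p_sum_one x ▸ Finset.single_le_sum (f := fun e => sys.p e x)
    (fun e _ => sys.p_nonneg e x) (Finset.mem_univ e)

theorem pathProb_nonneg {n : ℕ} (f : Fin n → E) (x : K) : 0 ≤ sys.pathProb f x := by
  induction n generalizing x with
  | zero => simp
  | succ n ih =>
    rw [← Fin.cons_self_tail f, pathProb_cons]
    exact mul_nonneg (sys.p_nonneg _ _) (ih _ _)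

theorem sum_pathProb (n : ℕ) (x : K) : ∑ f : Fin n → E, sys.pathProb f x = 1 := by
  induction n generalizing x with
  | zero => simp
  | succ n ih =>
    rw [sum_fin_succ_arrow]
    simp_rw [pathProb_cons, ← Finset.mul_sum, ih, mul_one]
    exact sys.p_sum_one x

theorem pathProb_le_one {n : ℕ} (f : Fin n → E) (x : K) : sys.pathProb f x ≤ 1 :=
  sys.sum_pathProb n x ▸ Finset.single_le_sum (f := fun f => sys.pathProb f x)
    (fun f _ => sys.pathProb_nonneg f x) (Finset.mem_univ f)

theorem measurable_pathProb {n : ℕ} (f : Fin n → E) : Measurable (sys.pathProb f) := by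
  induction n with
  | zero =>
    have : sys.pathProb f = fun _ => 1 := funext fun x => sys.pathProb_zero f x
    rw [this]
    exact measurable_const
  | succ n ih =>
    have : sys.pathProb f =
        fun x => sys.p (f 0) x * sys.pathProb (Fin.tail f) (sys.w (f 0) x) := by
      funext x
      conv_lhs => rw [← Fin.cons_self_tail f, pathProb_cons]
    rw [this]
    exact (sys.p_measurable _).mul ((ih _).comp (sys.w_measurable _))

theorem measurable_edgeEntropy : Measurable sys.edgeEntropy :=
  Finset.measurable_sum _ fun e _ => Real.continuous_negMulLog.measurable.comp (sys.p_measurable e)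

theorem measurable_pathEntropy (n : ℕ) : Measurable (sys.pathEntropy n) :=
  Finset.measurable_sum _ fun f _ =>
    Real.continuous_negMulLog.measurable.comp (sys.measurable_pathProb f)

theorem edgeEntropy_nonneg (x : K) : 0 ≤ sys.edgeEntropy x :=
  Finset.sum_nonneg fun e _ => Real.negMulLog_nonneg (sys.p_nonneg e x) (sys.p_le_one e x)

theorem abs_edgeEntropy_le (x : K) : |sys.edgeEntropy x| ≤ Fintype.card E := by
  refine (Finset.abs_sum_le_sum_abs _ _).trans ?_
  refine (Finset.sum_le_sum fun e _ =>
    abs_negMulLog_le_one (sys.p_nonneg e x) (sys.p_le_one e x)).trans ?_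
  simp

theorem abs_pathEntropy_le (n : ℕ) (x : K) :
    |sys.pathEntropy n x| ≤ Fintype.card (Fin n → E) := by
  refine (Finset.abs_sum_le_sum_abs _ _).trans ?_
  refine (Finset.sum_le_sum fun f _ =>
    abs_negMulLog_le_one (sys.pathProb_nonneg f x) (sys.pathProb_le_one f x)).trans ?_
  simp

theorem integrable_pathProb {μ : Measure K} [IsFiniteMeasure μ] {n : ℕ} (f : Fin n → E) :
    Integrable (sys.pathProb f) μ :=
  integrable_of_bounded (sys.measurable_pathProb f) (B := 1) fun x => by
    rw [abs_of_nonneg (sys.pathProb_nonneg f x)]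
    exact sys.pathProb_le_one f x

theorem pathEntropy_succ (n : ℕ) (x : K) :
    sys.pathEntropy (n + 1) x =
      sys.edgeEntropy x + ∑ e, sys.p e x * sys.pathEntropy n (sys.w e x) := by
  simp only [pathEntropy, edgeEntropy]
  rw [sum_fin_succ_arrow, ← Finset.sum_add_distrib]
  refine Finset.sum_congr rfl fun e _ => ?_
  simp_rw [pathProb_cons, Real.negMulLog_mul]
  rw [Finset.sum_add_distrib, ← Finset.sum_mul, sum_pathProb, one_mul, Finset.mul_sum]

theorem integral_pathEntropy {μ : Measure K} (hμ : sys.IsInvariant μ) (n : ℕ) :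
    ∫ x, sys.pathEntropy n x ∂μ = n * ∫ x, sys.edgeEntropy x ∂μ := by
  have := hμ.1
  induction n with
  | zero => simp [pathEntropy]
  | succ n ih =>
    simp_rw [pathEntropy_succ]
    rw [integral_add (integrable_of_bounded sys.measurable_edgeEntropy sys.abs_edgeEntropy_le),
      hμ.2 _ (sys.measurable_pathEntropy n) ⟨_, sys.abs_pathEntropy_le n⟩, ih]
    · push_cast
      ring
    · refine integrable_finsetSum _ fun e _ => ?_
      refine integrable_of_bounded ((sys.p_measurable e).mul
        ((sys.measurable_pathEntropy n).comp (sys.w_measurable e)))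
        (B := Fintype.card (Fin n → E)) fun x => ?_
      rw [abs_mul, abs_of_nonneg (sys.p_nonneg e x)]
      exact (mul_le_of_le_one_left (abs_nonneg _) (sys.p_le_one e x)).trans
        (sys.abs_pathEntropy_le n _)

/-- By concavity, the entropy of the averaged word distribution is at least the average of the
word entropies. -/
theorem le_sum_negMulLog_integral_pathProb {μ : Measure K} (hμ : sys.IsInvariant μ) (n : ℕ) :
    n * ∫ x, sys.edgeEntropy x ∂μ ≤
      ∑ f : Fin n → E, (∫ x, sys.pathProb f x ∂μ).negMulLog := by
  have := hμ.1
  have hintegrable : ∀ f : Fin n → E, Integrable (fun x => (sys.pathProb f x).negMulLog) μ :=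
    fun f =>
    integrable_of_bounded (Real.continuous_negMulLog.measurable.comp (sys.measurable_pathProb f))
      fun x => abs_negMulLog_le_one (sys.pathProb_nonneg f x) (sys.pathProb_le_one f x)
  rw [← sys.integral_pathEntropy hμ]
  simp only [pathEntropy]
  rw [integral_finsetSum _ fun f _ => hintegrable f]
  exact Finset.sum_le_sum fun f _ => Real.concaveOn_negMulLog.le_map_integral
    Real.continuous_negMulLog.continuousOn isClosed_Ici
    (ae_of_all _ fun x => sys.pathProb_nonneg f x) (sys.integrable_pathProb f) (hintegrable f)

variable {sys}

theorem mem_of_p_ne_zero {e : E} {x : K} (h : sys.p e x ≠ 0) : x ∈ sys.Ki (sys.edgeI e) :=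
  not_imp_comm.1 (sys.p_eq_zero e x) h

theorem eq_of_mem_of_mem {v v' : Fin N} {x : K} (h : x ∈ sys.Ki v) (h' : x ∈ sys.Ki v') :
    v = v' := by
  by_contra hne
  exact Set.disjoint_left.1 (sys.Ki_disjoint v v' hne) h h'

theorem pathProb_ne_zero_of_mem {δ : ℝ} (hδpos : 0 < δ)
    (hδ : ∀ e, ∀ x ∈ sys.Ki (sys.edgeI e), δ ≤ sys.p e x) {n : ℕ} (f : Fin n → E) {v : Fin N}
    {x y : K} (hx : x ∈ sys.Ki v) (hy : y ∈ sys.Ki v) (h : sys.pathProb f x ≠ 0) :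
    sys.pathProb f y ≠ 0 := by
  induction n generalizing v x y with
  | zero => simp
  | succ n ih =>
    rw [← Fin.cons_self_tail f, pathProb_cons] at h ⊢
    obtain ⟨hp, hP⟩ := mul_ne_zero_iff.1 h
    have hxe := mem_of_p_ne_zero hp
    obtain rfl := eq_of_mem_of_mem hx hxe
    exact mul_ne_zero (hδpos.trans_le (hδ _ _ hy)).ne'
      (ih _ (sys.w_mapsTo _ hx) (sys.w_mapsTo _ hy) hP)

/-- A one-step bound for the relative entropy of the edge distributions at two points of the same
cell propagates to words of length `n`. -/
theorem sum_pathProb_mul_log_sub_log_le {δ : ℝ} (hδpos : 0 < δ)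
    (hδ : ∀ e, ∀ x ∈ sys.Ki (sys.edgeI e), δ ≤ sys.p e x) {a : ℝ}
    (hcontr : sys.ContractiveOnAvg a) {ε C : ℝ} (hC : 0 ≤ C)
    (hstep : ∀ v, ∀ x ∈ sys.Ki v, ∀ y ∈ sys.Ki v,
      ∑ e, sys.p e x * (Real.log (sys.p e x) - Real.log (sys.p e y)) ≤
        ε + C * (1 - a) * dist x y)
    (n : ℕ) {v : Fin N} {x y : K} (hx : x ∈ sys.Ki v) (hy : y ∈ sys.Ki v) :
    ∑ f : Fin n → E, sys.pathProb f x *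
      (Real.log (sys.pathProb f x) - Real.log (sys.pathProb f y)) ≤ n * ε + C * dist x y := by
  induction n generalizing v x y with
  | zero => simpa using mul_nonneg hC dist_nonneg
  | succ n ih =>
    have hterm : ∀ e, ∑ f : Fin n → E, sys.pathProb (Fin.cons e f : Fin (n + 1) → E) x *
        (Real.log (sys.pathProb (Fin.cons e f : Fin (n + 1) → E) x) -
          Real.log (sys.pathProb (Fin.cons e f : Fin (n + 1) → E) y)) ≤
        sys.p e x * (Real.log (sys.p e x) - Real.log (sys.p e y)) +
          (sys.p e x * (n * ε) + C * (sys.p e x * dist (sys.w e x) (sys.w e y))) := by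
      intro e
      simp_rw [pathProb_cons]
      rcases eq_or_ne (sys.p e x) 0 with hp | hp
      · simp [hp]
      have hxe := mem_of_p_ne_zero hp
      obtain rfl := eq_of_mem_of_mem hx hxe
      have hpy : sys.p e y ≠ 0 := (hδpos.trans_le (hδ _ _ hy)).ne'
      have hsplit : ∀ f : Fin n → E, sys.p e x * sys.pathProb f (sys.w e x) *
          (Real.log (sys.p e x * sys.pathProb f (sys.w e x)) -
            Real.log (sys.p e y * sys.pathProb f (sys.w e y))) =
          sys.pathProb f (sys.w e x) *
            (sys.p e x * (Real.log (sys.p e x) - Real.log (sys.p e y))) +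
          sys.p e x * (sys.pathProb f (sys.w e x) *
            (Real.log (sys.pathProb f (sys.w e x)) - Real.log (sys.pathProb f (sys.w e y)))) := by
        intro f
        rcases eq_or_ne (sys.pathProb f (sys.w e x)) 0 with h | h
        · simp [h]
        · rw [Real.log_mul hp h, Real.log_mul hpy (pathProb_ne_zero_of_mem hδpos hδ f
            (sys.w_mapsTo e hx) (sys.w_mapsTo e hy) h)]
          ring
      simp_rw [hsplit]
      rw [Finset.sum_add_distrib, ← Finset.sum_mul, sum_pathProb, one_mul, ← Finset.mul_sum]
      have := mul_le_mul_of_nonneg_left (ih (sys.w_mapsTo e hx) (sys.w_mapsTo e hy))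
        (sys.p_nonneg e x)
      linarith
    rw [sum_fin_succ_arrow]
    refine (Finset.sum_le_sum fun e _ => hterm e).trans ?_
    rw [Finset.sum_add_distrib, Finset.sum_add_distrib, ← Finset.sum_mul, sys.p_sum_one,
      ← Finset.mul_sum]
    have h1 := hstep v x hx y hy
    have h2 := mul_le_mul_of_nonneg_left (hcontr v x hx y hy) hC
    push_cast
    linarith

theorem log_p_sub_log_p_le {δ : ℝ} (hδpos : 0 < δ)
    (hδ : ∀ e, ∀ x ∈ sys.Ki (sys.edgeI e), δ ≤ sys.p e x) {e : E} {x y : K}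
    (hx : x ∈ sys.Ki (sys.edgeI e)) (hy : y ∈ sys.Ki (sys.edgeI e)) :
    Real.log (sys.p e x) - Real.log (sys.p e y) ≤ |sys.p e x - sys.p e y| / δ ∧
      Real.log (sys.p e x) - Real.log (sys.p e y) ≤ |Real.log δ| := by
  have hpx := hδpos.trans_le (hδ e x hx)
  have hpy := hδpos.trans_le (hδ e y hy)
  constructor
  · rw [← Real.log_div hpx.ne' hpy.ne']
    calc Real.log (sys.p e x / sys.p e y) ≤ sys.p e x / sys.p e y - 1 :=
          Real.log_le_sub_one_of_pos (div_pos hpx hpy)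
      _ = (sys.p e x - sys.p e y) / sys.p e y := by field_simp
      _ ≤ |sys.p e x - sys.p e y| / δ := by
          gcongr
          · exact le_abs_self _
          · exact hδ e y hy
  · have h1 := Real.log_nonpos hpx.le (sys.p_le_one e x)
    have h2 := Real.log_le_log hδpos (hδ e y hy)
    have h3 := neg_le_abs (Real.log δ)
    linarith

theorem sum_p_mul_le_of_forall {v : Fin N} {x : K} (hx : x ∈ sys.Ki v) {g : E → ℝ} {B : ℝ}
    (hg : ∀ e, sys.edgeI e = v → g e ≤ B) : ∑ e, sys.p e x * g e ≤ B := by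
  calc ∑ e, sys.p e x * g e ≤ ∑ e, sys.p e x * B := by
        refine Finset.sum_le_sum fun e _ => ?_
        rcases eq_or_ne (sys.p e x) 0 with hp | hp
        · simp [hp]
        · exact mul_le_mul_of_nonneg_left
            (hg e (eq_of_mem_of_mem (mem_of_p_ne_zero hp) hx)) (sys.p_nonneg e x)
    _ = B := by rw [← Finset.sum_mul, sys.p_sum_one, one_mul]

theorem exists_one_step_bound {δ : ℝ} (hδpos : 0 < δ)
    (hδ : ∀ e, ∀ x ∈ sys.Ki (sys.edgeI e), δ ≤ sys.p e x)
    (hdini : ∀ e, DiniContinuous fun x : sys.Ki (sys.edgeI e) => sys.p e (x : K))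
    {a : ℝ} (ha1 : a < 1) {ε : ℝ} (hε : 0 < ε) :
    ∃ C : ℝ, 0 ≤ C ∧ ∀ v, ∀ x ∈ sys.Ki v, ∀ y ∈ sys.Ki v,
      ∑ e, sys.p e x * (Real.log (sys.p e x) - Real.log (sys.p e y)) ≤
        ε + C * (1 - a) * dist x y := by
  choose t ht htp using fun e => (hdini e).exists_forall_abs_sub_le (mul_pos hε hδpos)
  have h1a : 0 < 1 - a := by linarith
  obtain ⟨t₀, ht₀, ht₀le⟩ : ∃ t₀ > 0, ∀ e, t₀ ≤ t e := by
    obtain hE | hE := isEmpty_or_nonempty E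
    · exact ⟨1, one_pos, fun e => hE.elim e⟩
    · obtain ⟨e₀, he₀⟩ := Finite.exists_min t
      exact ⟨t e₀, ht e₀, he₀⟩
  refine ⟨|Real.log δ| / t₀ / (1 - a), by positivity, fun v x hx y hy => ?_⟩
  rw [div_mul_cancel₀ _ h1a.ne']
  rcases le_or_gt (dist x y) t₀ with hd | hd
  · have hle : ∑ e, sys.p e x * (Real.log (sys.p e x) - Real.log (sys.p e y)) ≤ ε := by
      refine sum_p_mul_le_of_forall hx ?_
      rintro e rfl
      refine (log_p_sub_log_p_le hδpos hδ hx hy).1.trans ((div_le_iff₀ hδpos).2 ?_)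
      exact htp e ⟨x, hx⟩ ⟨y, hy⟩ (hd.trans (ht₀le e))
    have : 0 ≤ |Real.log δ| / t₀ * dist x y := by positivity
    linarith
  · have hle : ∑ e, sys.p e x * (Real.log (sys.p e x) - Real.log (sys.p e y)) ≤ |Real.log δ| := by
      refine sum_p_mul_le_of_forall hx ?_
      rintro e rfl
      exact (log_p_sub_log_p_le hδpos hδ hx hy).2
    have : |Real.log δ| ≤ |Real.log δ| / t₀ * dist x y := by
      rw [div_mul_eq_mul_div, le_div_iff₀ ht₀]
      gcongr
    linarith

/-- The entropy of words of length `n` exceeds the average of the word entropies at fixed starting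
points by at most the relative entropy with respect to reference points of the cells. -/
theorem sum_negMulLog_integral_pathProb_le {δ : ℝ} (hδpos : 0 < δ)
    (hδ : ∀ e, ∀ x ∈ sys.Ki (sys.edgeI e), δ ≤ sys.p e x) {μ : Measure K}
    (hμ : sys.IsInvariant μ) (n : ℕ) {ys : Fin N → K} (hys : ∀ v, ys v ∈ sys.Ki v)
    {G : K → ℝ} (hG : Integrable G μ)
    (hDG : ∀ v, ∀ x ∈ sys.Ki v, ∑ f : Fin n → E, sys.pathProb f x *
      (Real.log (sys.pathProb f x) - Real.log (sys.pathProb f (ys v))) ≤ G x) :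
    ∑ f : Fin n → E, (∫ x, sys.pathProb f x ∂μ).negMulLog ≤
      n * (∫ x, sys.edgeEntropy x ∂μ) + Real.log N + ∫ x, G x ∂μ := by
  have := hμ.1
  have hN : 0 < (N : ℝ) := by
    obtain ⟨x⟩ : Nonempty K := μ.nonempty_of_neZero
    exact_mod_cast (sys.Ki_cover x).choose.pos
  set Q : (Fin n → E) → ℝ := fun f => (∑ v, sys.pathProb f (ys v)) / N with hQ
  have hQ0 : ∀ f, 0 ≤ Q f := fun f =>
    div_nonneg (Finset.sum_nonneg fun v _ => sys.pathProb_nonneg f _) hN.le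
  have hQge : ∀ f v, sys.pathProb f (ys v) / N ≤ Q f := fun f v =>
    div_le_div_of_nonneg_right (Finset.single_le_sum (f := fun v => sys.pathProb f (ys v))
      (fun v _ => sys.pathProb_nonneg f _) (Finset.mem_univ v)) hN.le
  have hpos : ∀ (f : Fin n → E) v x, x ∈ sys.Ki v → sys.pathProb f x ≠ 0 →
      0 < sys.pathProb f (ys v) := fun f v x hx h => (sys.pathProb_nonneg f _).lt_of_ne'
      (pathProb_ne_zero_of_mem hδpos hδ f hx (hys v) h)
  have hPQ : ∀ f, ∫ x, sys.pathProb f x ∂μ ≠ 0 → Q f ≠ 0 := by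
    intro f hf h0
    refine hf ?_
    have : ∀ x, sys.pathProb f x = 0 := by
      intro x
      by_contra hx
      obtain ⟨v, hv⟩ := sys.Ki_cover x
      have := div_pos (hpos f v x hv hx) hN
      linarith [hQge f v]
    simp [this]
  have hsum : ∑ f, Q f ≤ ∑ f : Fin n → E, ∫ x, sys.pathProb f x ∂μ := by
    rw [← integral_finsetSum _ fun f _ => sys.integrable_pathProb f]
    simp only [hQ]
    rw [← Finset.sum_div, Finset.sum_comm]
    simp [sum_pathProb, hN.ne']
  refine (sum_negMulLog_le_sum_mul_neg_log (fun f => integral_nonneg (sys.pathProb_nonneg f)) hQ0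
    hPQ hsum).trans ?_
  have hpe := integrable_of_bounded (μ := μ) (sys.measurable_pathEntropy n)
    (sys.abs_pathEntropy_le n)
  have hpeN : Integrable (fun x => sys.pathEntropy n x + Real.log N) μ :=
    hpe.add (integrable_const _)
  rw [← sys.integral_pathEntropy hμ]
  calc ∑ f : Fin n → E, (∫ x, sys.pathProb f x ∂μ) * -Real.log (Q f)
      = ∫ x, ∑ f : Fin n → E, sys.pathProb f x * -Real.log (Q f) ∂μ := by
        rw [integral_finsetSum _ fun f _ => (sys.integrable_pathProb f).mul_const _]
        simp_rw [integral_mul_const]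
    _ ≤ ∫ x, (sys.pathEntropy n x + Real.log N + G x) ∂μ := by
        refine integral_mono (integrable_finsetSum _ fun f _ =>
          (sys.integrable_pathProb f).mul_const _) (hpeN.add hG) fun x => ?_
        obtain ⟨v, hv⟩ := sys.Ki_cover x
        have hterm : ∀ f : Fin n → E, sys.pathProb f x * -Real.log (Q f) ≤
            (sys.pathProb f x).negMulLog + sys.pathProb f x * Real.log N +
              sys.pathProb f x *
                (Real.log (sys.pathProb f x) - Real.log (sys.pathProb f (ys v))) := by
          intro f
          rcases eq_or_ne (sys.pathProb f x) 0 with h | h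
          · simp [h]
          · have hy := hpos f v x hv h
            have hlog := Real.log_le_log (div_pos hy hN) (hQge f v)
            rw [Real.log_div hy.ne' hN.ne'] at hlog
            have := mul_le_mul_of_nonneg_left hlog (sys.pathProb_nonneg f x)
            simp only [Real.negMulLog]
            linarith
        refine (Finset.sum_le_sum fun f _ => hterm f).trans ?_
        rw [Finset.sum_add_distrib, Finset.sum_add_distrib, ← Finset.sum_mul, sum_pathProb,
          one_mul]
        exact add_le_add_right (hDG v x hv) _
    _ = _ := by
        rw [integral_add hpeN hG, integral_add hpe (integrable_const _)]
        simp

/-- The average of the word entropies at fixed starting points is also an asymptotic upper bound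
for the entropy of words. -/
theorem eventually_sum_negMulLog_integral_pathProb_le [BorelSpace K] {δ : ℝ} (hδpos : 0 < δ)
    (hδ : ∀ e, ∀ x ∈ sys.Ki (sys.edgeI e), δ ≤ sys.p e x)
    (hdini : ∀ e, DiniContinuous fun x : sys.Ki (sys.edgeI e) => sys.p e (x : K))
    {a : ℝ} (ha1 : a < 1) (hcontr : sys.ContractiveOnAvg a) {μ : Measure K}
    (hμ : sys.IsInvariant μ) {ε : ℝ} (hε : 0 < ε) :
    ∀ᶠ n : ℕ in atTop, ∑ f : Fin n → E, (∫ x, sys.pathProb f x ∂μ).negMulLog ≤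
      n * ((∫ x, sys.edgeEntropy x ∂μ) + ε) := by
  have := hμ.1
  choose ys hys using sys.Ki_nonempty
  obtain ⟨C, hC, hstep⟩ := exists_one_step_bound hδpos hδ hdini ha1 (half_pos (half_pos hε))
  set L := |Real.log δ| with hL
  set r : K → ℝ := fun x => C * ∑ v, dist x (ys v) with hr
  have hr0 : ∀ x, 0 ≤ r x := fun x => mul_nonneg hC (Finset.sum_nonneg fun v _ => dist_nonneg)
  have hrm : Measurable r := by
    refine Measurable.const_mul (Finset.measurable_sum _ fun v _ => ?_) C
    exact (continuous_id.dist continuous_const).measurable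
  have hminL : ∀ (n : ℕ) x, ‖min L (r x / n)‖ ≤ L := fun n x => by
    rw [Real.norm_of_nonneg (le_min (abs_nonneg _) (div_nonneg (hr0 x) n.cast_nonneg))]
    exact min_le_left _ _
  have hminm : ∀ n : ℕ, Measurable fun x => min L (r x / n) := fun n =>
    measurable_const.min (hrm.div_const _)
  have hlim : Tendsto (fun n : ℕ => ∫ x, min L (r x / n) ∂μ) atTop (nhds 0) := by
    have := tendsto_integral_of_dominated_convergence (μ := μ)
      (F := fun (n : ℕ) x => min L (r x / n)) (f := fun _ => 0) (fun _ => L)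
      (fun n => (hminm n).aestronglyMeasurable) (integrable_const _)
      (fun n => ae_of_all _ (hminL n)) (ae_of_all _ fun x => by
        have h := (tendsto_const_nhds (x := L)).min
          (tendsto_const_div_atTop_nhds_zero_nat (r x))
        rwa [min_eq_right (abs_nonneg _)] at h)
    simpa using this
  have hlog : ∀ᶠ n : ℕ in atTop, Real.log N ≤ n * (ε / 2) :=
    (tendsto_natCast_atTop_atTop.atTop_mul_const (half_pos hε)).eventually_ge_atTop _
  filter_upwards [hlim.eventually (gt_mem_nhds (half_pos (half_pos hε))), hlog,
    eventually_gt_atTop 0] with n hn1 hn2 hn0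
  have hn0' : (0 : ℝ) < n := by exact_mod_cast hn0
  have hmin : Integrable (fun x => min L (r x / n)) μ := integrable_of_bounded (hminm n) (hminL n)
  have hbound := sum_negMulLog_integral_pathProb_le hδpos hδ hμ n hys
    (G := fun x => n * (ε / 2 / 2) + n * min L (r x / n))
    ((integrable_const _).add (hmin.const_mul _)) (fun v x hx => by
      have hd : C * dist x (ys v) ≤ r x := mul_le_mul_of_nonneg_left
        (Finset.single_le_sum (f := fun v => dist x (ys v)) (fun v _ => dist_nonneg)
          (Finset.mem_univ v)) hC
      have h1 := sum_pathProb_mul_log_sub_log_le hδpos hδ hcontr hC hstep n hx (hys v)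
      have h2 := sum_pathProb_mul_log_sub_log_le hδpos hδ hcontr le_rfl (ε := L)
        (fun v x hx y hy => by
          simpa using sum_p_mul_le_of_forall hx (by
            rintro e rfl
            exact (log_p_sub_log_p_le hδpos hδ hx hy).2)) n hx (hys v)
      rw [mul_min_of_nonneg _ _ hn0'.le, mul_div_cancel₀ _ hn0'.ne']
      have h3 : 0 ≤ n * (ε / 2 / 2) := by positivity
      rcases min_cases (n * L) (r x) with ⟨h, -⟩ | ⟨h, -⟩ <;> rw [h] <;> linarith)
  rw [integral_add (integrable_const _) (hmin.const_mul _),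
    integral_const_mul (n : ℝ) fun x => min L (r x / n)] at hbound
  simp only [integral_const, probReal_univ, one_smul] at hbound
  have := mul_le_mul_of_nonneg_left hn1.le hn0'.le
  linarith

theorem integral_edgeEntropy_eq {μ : Measure K} [IsFiniteMeasure μ] :
    ∫ x, sys.edgeEntropy x ∂μ =
      -∑ e : E, ∫ x in sys.Ki (sys.edgeI e), sys.p e x * Real.log (sys.p e x) ∂μ := by
  simp only [edgeEntropy]
  rw [integral_finsetSum, ← Finset.sum_neg_distrib]
  · refine Finset.sum_congr rfl fun e _ => ?_
    rw [setIntegral_eq_integral_of_forall_compl_eq_zero, ← integral_neg]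
    · simp [Real.negMulLog]
    · intro x hx
      simp [sys.p_eq_zero e x hx]
  · exact fun e _ => integrable_of_bounded
      (Real.continuous_negMulLog.measurable.comp (sys.p_measurable e))
      fun x => abs_negMulLog_le_one (sys.p_nonneg e x) (sys.p_le_one e x)

end MarkovSystem

theorem IsMarkovMeasure.measure_subword_preimage {K : Type*} [MetricSpace K] [MeasurableSpace K]
    {N : ℕ} {E : Type*} [Fintype E] [MeasurableSpace E] {sys : MarkovSystem K N E}
    {μ : Measure K} {M : Measure (ℤ → E)} (hM : IsMarkovMeasure sys μ M) (s : ℤ) {n : ℕ}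
    (b : Fin n → E) :
    M (subword s n ⁻¹' {b}) = ENNReal.ofReal (∫ x, sys.pathProb b x ∂μ) := by
  rw [← setOf_forall_get_ofFn]
  exact hM.2 s (List.ofFn b)

theorem IsMarkovMeasure.partEntropy_subword {K : Type*} [MetricSpace K] [MeasurableSpace K]
    {N : ℕ} {E : Type*} [Fintype E] [MeasurableSpace E] {sys : MarkovSystem K N E}
    {μ : Measure K} {M : Measure (ℤ → E)} (hM : IsMarkovMeasure sys μ M) (s : ℤ) (n : ℕ) :
    partEntropy M (subword s n) =
      ∑ f : Fin n → E, (∫ x, sys.pathProb f x ∂μ).negMulLog := by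
  rw [partEntropy_eq_sum_negMulLog]
  refine Finset.sum_congr rfl fun f _ => ?_
  rw [Measure.real, hM.measure_subword_preimage,
    ENNReal.toReal_ofReal (integral_nonneg (sys.pathProb_nonneg f))]

/-- Entropy formula for the generalized Markov shift when the invariant measure is
unique: `h_M(S) = -∑_{e} ∫_{K_{i(e)}} p_e log p_e dμ`. -/
theorem entropy_of_generalized_markov_shift
    {K : Type*} [MetricSpace K] [MeasurableSpace K] [BorelSpace K]
    {N : ℕ} {E : Type*} [Fintype E] [MeasurableSpace E] [MeasurableSingletonClass E]
    (sys : MarkovSystem K N E) (a : ℝ) (ha0 : 0 < a) (ha1 : a < 1)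
    (hcontr : sys.ContractiveOnAvg a)
    (hrelcpt : ∀ s : Set K, Bornology.IsBounded s → IsCompact (closure s))
    (hopen : ∀ v, IsOpen (sys.Ki v))
    (δ : ℝ) (hδpos : 0 < δ)
    (hδ : ∀ e, ∀ x ∈ sys.Ki (sys.edgeI e), δ ≤ sys.p e x)
    (hdini : ∀ e, DiniContinuous fun x : sys.Ki (sys.edgeI e) => sys.p e (x : K))
    (hsurj : Function.Surjective sys.edgeI)
    (μ : Measure K) (hμ : sys.IsInvariant μ)
    (huniq : ∀ ν : Measure K, sys.IsInvariant ν → ν = μ)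
    (M : Measure (ℤ → E)) (hM : IsMarkovMeasure sys μ M) :
    ksEntropy M shift = ENNReal.ofReal
      (-∑ e : E, ∫ x in sys.Ki (sys.edgeI e), sys.p e x * Real.log (sys.p e x) ∂μ) := by
  have := hμ.1
  have := hM.1
  have hshift : MeasurePreserving shift M M := measurePreserving_shift M fun s t n b => by
    rw [hM.measure_subword_preimage, hM.measure_subword_preimage]
  rw [← sys.integral_edgeEntropy_eq]
  refine le_antisymm (ksEntropy_shift_le M hshift (integral_nonneg sys.edgeEntropy_nonneg) ?_)
    (le_ksEntropy_shift M fun n => ?_)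
  · intro ε hε
    filter_upwards [MarkovSystem.eventually_sum_negMulLog_integral_pathProb_le hδpos hδ hdini ha1
      hcontr hμ hε] with n hn s
    rwa [hM.partEntropy_subword]
  · rw [hM.partEntropy_subword]
    exact sys.le_sum_negMulLog_integral_pathProb hμ n
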